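/- Pointwise control of the Littlewood–Paley g-function by the area function: for f ∈ L¹(ℝⁿ) define g(f)(x)² = ∫_{(ℝ₊)^m} |∇₁⋯∇_m (f*P_t)(x)|² t₁⋯t_m dt and S(f)(x)² = ∫_{Γ(x)} |∇₁⋯∇_m (f*P_t)(x')|² (t₁⋯t_m dt dx')/|R(x,t)|, where Γ(x) = {(x',t) : x' ∈ R(x,t)}. Then g(f)(x) ≲ S(f)(x) pointwise, with implicit constant depending only on e₁,…,e_m. -/

import Mathlib

open MeasureTheory ENNReal

noncomputable section

/-- The one-dimensional Poisson kernel `P_t(s) = (1/π) t/(t²+s²)`. -/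
def poisson (t s : ℝ) : ℝ := (1 / Real.pi) * (t / (t ^ 2 + s ^ 2))

/-- The twisted rectangle `R(x,r)`. -/
def twistedRect {n m : ℕ} (e : Fin m → EuclideanSpace ℝ (Fin n))
    (x : EuclideanSpace ℝ (Fin n)) (r : Fin m → ℝ) : Set (EuclideanSpace ℝ (Fin n)) :=
  {y | ∃ lam : Fin m → ℝ, (∀ j, |lam j| < r j) ∧ y = x + ∑ j, lam j • e j}

/-- The iterated Poisson integral `(f*P_t)(x)`. -/
def iterP {n m : ℕ} (e : Fin m → EuclideanSpace ℝ (Fin n))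
    (f : EuclideanSpace ℝ (Fin n) → ℝ)
    (x : EuclideanSpace ℝ (Fin n)) (t : Fin m → ℝ) : ℝ :=
  ∫ s : Fin m → ℝ, (∏ j, poisson (t j) (s j)) * f (x - ∑ j, s j • e j)

/-- A component of the mixed gradient `∇₁⋯∇_m`: for each `μ`, apply `X_μ`
(if `α μ = true`) or `∂_{t_μ}` (if `α μ = false`). -/
def Dmix {n m : ℕ} (e : Fin m → EuclideanSpace ℝ (Fin n)) (α : Fin m → Bool)
    (g : EuclideanSpace ℝ (Fin n) → (Fin m → ℝ) → ℝ) :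
    EuclideanSpace ℝ (Fin n) → (Fin m → ℝ) → ℝ :=
  (List.finRange m).foldl
    (fun h μ => if α μ then (fun x t => lineDeriv ℝ (fun y => h y t) x (e μ))
      else (fun x t => deriv (fun τ => h x (Function.update t μ τ)) (t μ))) g

/-- The squared length `|∇₁⋯∇_m (f*P_t)(x)|²` of the mixed gradient. -/
def gradSq {n m : ℕ} (e : Fin m → EuclideanSpace ℝ (Fin n))
    (f : EuclideanSpace ℝ (Fin n) → ℝ)
    (x : EuclideanSpace ℝ (Fin n)) (t : Fin m → ℝ) : ℝ :=
  ∑ α : Fin m → Bool, (Dmix e α (iterP e f) x t) ^ 2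

/-- The non-tangential approach region `Γ_β(x)`. -/
def ntCone {n m : ℕ} (e : Fin m → EuclideanSpace ℝ (Fin n)) (β : ℝ)
    (x : EuclideanSpace ℝ (Fin n)) : Set (EuclideanSpace ℝ (Fin n) × (Fin m → ℝ)) :=
  {p | (∀ j, 0 < p.2 j) ∧ p.1 ∈ twistedRect e x (fun j => β * p.2 j)}

/-- The Lusin–Littlewood–Paley area function `S(f)`. -/
def Sfun {n m : ℕ} (e : Fin m → EuclideanSpace ℝ (Fin n))
    (f : EuclideanSpace ℝ (Fin n) → ℝ) (x : EuclideanSpace ℝ (Fin n)) : ℝ≥0∞ :=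
  (∫⁻ p : EuclideanSpace ℝ (Fin n) × (Fin m → ℝ),
      Set.indicator (ntCone e 1 x)
        (fun p => ENNReal.ofReal (gradSq e f p.1 p.2) *
          (∏ j, ENNReal.ofReal (p.2 j)) / volume (twistedRect e x p.2)) p) ^ (1/2 : ℝ)

/-- The Littlewood–Paley `g`-function. -/
def gfun {n m : ℕ} (e : Fin m → EuclideanSpace ℝ (Fin n))
    (f : EuclideanSpace ℝ (Fin n) → ℝ) (x : EuclideanSpace ℝ (Fin n)) : ℝ≥0∞ :=
  (∫⁻ t : Fin m → ℝ,
      Set.indicator {t : Fin m → ℝ | ∀ j, 0 < t j}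
        (fun t => ENNReal.ofReal (gradSq e f x t) * ∏ j, ENNReal.ofReal (t j)) t) ^ (1/2 : ℝ)


/-! ### Part 1: geometry of the twisted rectangles -/

lemma lintegral_fin_prod {n : ℕ} (f : Fin n → ℝ → ℝ≥0∞) (hf : ∀ i, Measurable (f i)) :
    ∫⁻ x : Fin n → ℝ, ∏ i, f i (x i) = ∏ i, ∫⁻ x, f i x := by
  induction n with
  | zero => simp [volume_pi]
  | succ n ih =>
    have hm := (volume_preserving_piFinSuccAbove (fun _ : Fin (n+1) => ℝ) 0).symm
    rw [← hm.lintegral_comp_emb (MeasurableEquiv.measurableEmbedding _)]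
    simp_rw [Fin.prod_univ_succ]
    have := ih (fun i => f i.succ) (fun i => hf _)
    rw [← this, ← lintegral_prod_mul (hf 0).aemeasurable]
    · rfl
    · exact (Finset.measurable_prod _ (fun i _ => (hf _).comp (measurable_pi_apply i))).aemeasurable

lemma lintegral_ft_prod {ι : Type*} [Fintype ι] (f : ι → ℝ → ℝ≥0∞) (hf : ∀ i, Measurable (f i)) :
    ∫⁻ x : ι → ℝ, ∏ i, f i (x i) = ∏ i, ∫⁻ x, f i x := by
  let e := (Fintype.equivFin ι).symm
  rw [← (volume_measurePreserving_piCongrLeft (fun _ : ι => ℝ) e).lintegral_comp_emb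
    (MeasurableEquiv.measurableEmbedding _)]
  simp_rw [← e.prod_comp, MeasurableEquiv.coe_piCongrLeft]
  rw [← lintegral_fin_prod (fun i => f (e i)) (fun i => hf _)]
  congr 1 with x
  congr 1 with i
  congr 1
  exact Equiv.piCongrLeft_apply_apply (fun _ => ℝ) e x i

lemma lint_basis {n : ℕ} {ι : Type*} [Fintype ι] (hc : Fintype.card ι = n)
    (b : ι → EuclideanSpace ℝ (Fin n)) (hb : LinearIndependent ℝ b) :
    ∃ c : ℝ≥0∞, 0 < c ∧ c < ∞ ∧ ∀ (φ : EuclideanSpace ℝ (Fin n) → ℝ≥0∞), Measurable φ → ∀ y,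
      ∫⁻ u : ι → ℝ, φ (y + ∑ i, u i • b i) = c * ∫⁻ z, φ z := by
  let L : (ι → ℝ) →ₗ[ℝ] EuclideanSpace ℝ (Fin n) := Fintype.linearCombination ℝ b
  have hinj : Function.Injective L := by
    exact linearIndependent_iff_injective_fintypeLinearCombination.1 hb
  have hsurj : Function.Surjective L := by
    rw [← LinearMap.injective_iff_surjective_of_finrank_eq_finrank]
    · exact hinj
    · simp [hc]
  let L' := LinearEquiv.ofBijective L ⟨hinj, hsurj⟩
  have hH : (Measure.map L (volume : Measure (ι → ℝ))).IsAddHaarMeasure := by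
    exact L'.toContinuousLinearEquiv.isAddHaarMeasure_map volume
  have heq := Measure.isAddLeftInvariant_eq_smul (Measure.map L (volume : Measure (ι → ℝ)))
    (volume : Measure (EuclideanSpace ℝ (Fin n)))
  have hpos := Measure.addHaarScalarFactor_pos_of_isAddHaarMeasure
    (Measure.map L (volume : Measure (ι → ℝ))) (volume : Measure (EuclideanSpace ℝ (Fin n)))
  refine ⟨(Measure.addHaarScalarFactor (Measure.map L (volume : Measure (ι → ℝ)))
    (volume : Measure (EuclideanSpace ℝ (Fin n))) : ℝ≥0∞), by exact_mod_cast hpos,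
    ENNReal.coe_lt_top, ?_⟩
  intro φ hφ y
  have hLm : Measurable L := L.continuous_of_finiteDimensional.measurable
  have h1 : ∫⁻ u : ι → ℝ, φ (y + ∑ i, u i • b i)
      = ∫⁻ z, φ (y + z) ∂(Measure.map L (volume : Measure (ι → ℝ))) := by
    rw [lintegral_map (by fun_prop) hLm]
    rfl
  generalize Measure.addHaarScalarFactor (Measure.map L (volume : Measure (ι → ℝ)))
    (volume : Measure (EuclideanSpace ℝ (Fin n))) = q at heq
  rw [h1, heq]
  have := lintegral_add_left_eq_self (μ := (volume : Measure (EuclideanSpace ℝ (Fin n)))) φ y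
  rw [← this]
  exact lintegral_smul_measure (q : ℝ≥0∞) _

/-- splitting a product integral along an index set -/
lemma lint_split_aux {n m : ℕ} (e : Fin m → EuclideanSpace ℝ (Fin n)) (p : Fin m → Prop)
    [DecidablePred p] (hI : Fintype.card {i // p i} = n)
    (hb : LinearIndependent ℝ (fun i : {i // p i} => e i)) :
    ∃ c : ℝ≥0∞, 0 < c ∧ c < ∞ ∧ ∀ (w : Fin m → ℝ → ℝ≥0∞), (∀ j, Measurable (w j)) →
      (∀ j s, w j s ≤ 1) →
      ∀ (φ : EuclideanSpace ℝ (Fin n) → ℝ≥0∞), Measurable φ → ∀ y,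
      ∫⁻ s : Fin m → ℝ, (∏ j, w j (s j)) * φ (y + ∑ j, s j • e j)
        ≤ (∏ j : {i // ¬ p i}, ∫⁻ s, w j s) * (c * ∫⁻ z, φ z) := by
  obtain ⟨c, c0, c1, hc⟩ := lint_basis hI _ hb
  refine ⟨c, c0, c1, ?_⟩
  intro w hw hw1 φ hφ y
  have hm := (volume_preserving_piEquivPiSubtypeProd (fun _ : Fin m => ℝ) p).symm
  rw [← hm.lintegral_comp_emb (MeasurableEquiv.measurableEmbedding _)]
  rw [Measure.volume_eq_prod, lintegral_prod_symm]
  · have hval : ∀ (u : {i // p i} → ℝ) (v : {i // ¬ p i} → ℝ) ,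
        (∏ j, w j ((MeasurableEquiv.piEquivPiSubtypeProd (fun _ : Fin m => ℝ)
          p).symm (u, v) j)) = (∏ i : {i // p i}, w i (u i)) * ∏ i : {i // ¬ p i}, w i (v i) := by
      intro u v
      rw [← Fintype.prod_subtype_mul_prod_subtype p]
      congr 1
      · refine Finset.prod_congr rfl fun i _ => ?_
        simp only [MeasurableEquiv.piEquivPiSubtypeProd, Equiv.piEquivPiSubtypeProd,
          MeasurableEquiv.coe_mk, MeasurableEquiv.symm_mk, Equiv.coe_fn_symm_mk, dif_pos i.2]
      · refine Finset.prod_congr rfl fun i _ => ?_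
        simp [MeasurableEquiv.piEquivPiSubtypeProd, Equiv.piEquivPiSubtypeProd, i.2]
    have hval2 : ∀ (u : {i // p i} → ℝ) (v : {i // ¬ p i} → ℝ) ,
        (∑ j, ((MeasurableEquiv.piEquivPiSubtypeProd (fun _ : Fin m => ℝ)
          p).symm (u, v) j) • e j) = (∑ i : {i // p i}, u i • e i) + ∑ i : {i // ¬ p i}, v i • e i := by
      intro u v
      rw [← Fintype.sum_subtype_add_sum_subtype p]
      congr 1
      · refine Finset.sum_congr rfl fun i _ => ?_
        simp only [MeasurableEquiv.piEquivPiSubtypeProd, Equiv.piEquivPiSubtypeProd,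
          MeasurableEquiv.coe_mk, MeasurableEquiv.symm_mk, Equiv.coe_fn_symm_mk, dif_pos i.2]
      · refine Finset.sum_congr rfl fun i _ => ?_
        simp [MeasurableEquiv.piEquivPiSubtypeProd, Equiv.piEquivPiSubtypeProd, i.2]
    calc _ ≤ ∫⁻ v : {i // ¬ p i} → ℝ, (∏ i : {i // ¬ p i}, w i (v i)) * (c * ∫⁻ z, φ z) := by
          refine lintegral_mono fun v => ?_
          rw [← hc φ hφ (y + ∑ i : {i // ¬ p i}, v i • e i), ← lintegral_const_mul _ (by fun_prop)]
          refine lintegral_mono fun u => ?_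
          simp only []
          rw [hval, hval2]
          rw [show y + ((∑ i : {i // p i}, u i • e i) + ∑ i : {i // ¬ p i}, v i • e i)
            = y + (∑ i : {i // ¬ p i}, v i • e i) + ∑ i : {i // p i}, u i • e i by abel]
          gcongr
          calc _ ≤ 1 * ∏ i : {i // ¬ p i}, w i (v i) := by
                gcongr
                exact Finset.prod_le_one' (fun i _ => hw1 _ _)
            _ = _ := one_mul _
      _ = _ := by
          rw [lintegral_mul_const]
          · congr 1
            rw [lintegral_ft_prod (fun i : {i // ¬ p i} => w i) (fun i => hw _)]
          · exact Finset.measurable_prod _ (fun i _ => (hw _).comp (measurable_pi_apply i))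
  · apply Measurable.aemeasurable
    have h1 : Measurable (fun s : Fin m → ℝ => (∏ j, w j (s j)) * φ (y + ∑ j, s j • e j)) := by
      refine Measurable.mul ?_ ?_
      · exact Finset.measurable_prod _ (fun i _ => (hw _).comp (measurable_pi_apply i))
      · exact hφ.comp (by fun_prop)
    exact h1.comp (MeasurableEquiv.measurable _)

lemma lint_split {n m : ℕ} (e : Fin m → EuclideanSpace ℝ (Fin n)) (I : Finset (Fin m))
    (hI : I.card = n) (hb : LinearIndependent ℝ (fun i : I => e i)) :
    ∃ c : ℝ≥0∞, 0 < c ∧ c < ∞ ∧ ∀ (w : Fin m → ℝ → ℝ≥0∞), (∀ j, Measurable (w j)) →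
      (∀ j s, w j s ≤ 1) →
      ∀ (φ : EuclideanSpace ℝ (Fin n) → ℝ≥0∞), Measurable φ → ∀ y,
      ∫⁻ s : Fin m → ℝ, (∏ j, w j (s j)) * φ (y + ∑ j, s j • e j)
        ≤ (∏ j ∈ Iᶜ, ∫⁻ s, w j s) * (c * ∫⁻ z, φ z) := by
  classical
  obtain ⟨p, hp⟩ : ∃ p : Fin m → Prop, ∀ i, p i ↔ i ∈ I := ⟨_, fun _ => Iff.rfl⟩
  obtain ⟨c, c0, c1, hc⟩ := lint_split_aux e p
    (by rw [← hI]; exact Fintype.card_of_subtype I (by simp [hp]))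
    (hb.comp (fun i : {i // p i} => (⟨i, (hp i).1 i.2⟩ : I))
      (fun i j h => Subtype.ext (congrArg (fun k : I => (k : Fin m)) h)))
  refine ⟨c, c0, c1, fun w hw hw1 φ hφ y => (hc w hw hw1 φ hφ y).trans (le_of_eq ?_)⟩
  congr 1
  exact (Finset.prod_subtype Iᶜ (by simp [hp]) (fun i => ∫⁻ s, w i s)).symm

/-- volume of the twisted rectangle when the sides in `I` dominate -/
lemma vol_rect_aux {n m : ℕ} (e : Fin m → EuclideanSpace ℝ (Fin n)) (I : Finset (Fin m))
    (hI : I.card = n) (hb : LinearIndependent ℝ (fun i : I => e i)) :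
    ∃ C : ℝ≥0∞, C < ∞ ∧ ∀ (x : EuclideanSpace ℝ (Fin n)) (t : Fin m → ℝ), (∀ j, 0 < t j) →
      (∀ i ∈ I, ∀ j, j ∉ I → t j ≤ t i) →
      volume (twistedRect e x t) ≤ C * ∏ i ∈ I, ENNReal.ofReal (t i) := by
  classical
  obtain ⟨c, c0, c1, hc⟩ := lint_basis (ι := I) (by simpa using hI) _ hb
  have hspan : ∀ j, ∃ a : I → ℝ, e j = ∑ i, a i • e i := by
    intro j
    have hinj : Function.Injective (Fintype.linearCombination ℝ (fun i : I => e i)) :=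
      linearIndependent_iff_injective_fintypeLinearCombination.1 hb
    have hsurj : Function.Surjective (Fintype.linearCombination ℝ (fun i : I => e i)) := by
      rw [← LinearMap.injective_iff_surjective_of_finrank_eq_finrank]
      · exact hinj
      · simp [hI]
    obtain ⟨a, ha⟩ := hsurj (e j)
    exact ⟨a, by rw [← ha]; rfl⟩
  choose a ha using hspan
  set M : ℝ := 1 + ∑ j, ∑ i, |a j i| with hM
  have hM0 : 0 < M := by positivity
  refine ⟨c⁻¹ * ENNReal.ofReal (2 * M) ^ n, ?_, ?_⟩
  · exact ENNReal.mul_lt_top (ENNReal.inv_lt_top.2 c0) (ENNReal.pow_lt_top ENNReal.ofReal_lt_top)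
  intro x t ht hdom
  -- the parallelepiped
  set B : Set (I → ℝ) := Set.univ.pi (fun i : I => Set.Ioo (-(M * t i)) (M * t i)) with hB
  set P : Set (EuclideanSpace ℝ (Fin n)) :=
    (fun u : I → ℝ => x + ∑ i, u i • e i) '' B with hP
  have hsub : twistedRect e x t ⊆ P := by
    rintro y ⟨l, hl, rfl⟩
    refine ⟨fun i => l i + ∑ j ∈ Iᶜ, l j * a j i, ?_, ?_⟩
    · rw [hB, Set.mem_univ_pi]
      intro i
      rw [Set.mem_Ioo, ← abs_lt]
      calc |l i + ∑ j ∈ Iᶜ, l j * a j i| ≤ |l i| + ∑ j ∈ Iᶜ, |l j * a j i| :=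
            (abs_add_le _ _).trans (by gcongr; exact Finset.abs_sum_le_sum_abs _ _)
        _ < t i + ∑ j ∈ Iᶜ, t i * |a j i| := by
            refine add_lt_add_of_lt_of_le (hl i) (Finset.sum_le_sum fun j hj => ?_)
            rw [abs_mul]
            gcongr
            exact (hl j).le.trans (hdom i i.2 j (by simpa using hj))
        _ ≤ M * t i := by
            rw [← Finset.mul_sum, hM]
            have h1 : ∑ j ∈ Iᶜ, |a j i| ≤ ∑ j, ∑ i, |a j i| := by
              refine (Finset.sum_le_sum_of_subset_of_nonneg (Finset.subset_univ _)
                (fun _ _ _ => abs_nonneg _)).trans (Finset.sum_le_sum fun j _ => ?_)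
              exact Finset.single_le_sum (f := fun i => |a j i|)
                (fun _ _ => abs_nonneg _) (Finset.mem_univ i)
            nlinarith [ht i]
    · simp only []
      congr 1
      rw [← Finset.sum_add_sum_compl I (fun j => l j • e j)]
      rw [← Finset.sum_coe_sort I (fun j => l j • e j)]
      simp only [add_smul, Finset.sum_add_distrib]
      congr 1
      simp only [Finset.sum_smul]
      rw [Finset.sum_comm]
      refine Finset.sum_congr rfl fun j _ => ?_
      conv_rhs => rw [ha j]
      rw [Finset.smul_sum]
      simp only [mul_smul]
  have hinj : Function.Injective (fun u : I → ℝ => x + ∑ i, u i • e i) := by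
    intro u v huv
    exact linearIndependent_iff_injective_fintypeLinearCombination.1 hb (add_left_cancel huv)
  have hPm : MeasurableSet P := by
    refine MeasurableSet.image_of_continuousOn_injOn ?_ ?_ hinj.injOn
    · exact MeasurableSet.univ_pi (fun i => measurableSet_Ioo)
    · fun_prop
  have hvP : c * volume P = ∏ i : I, ENNReal.ofReal (2 * M * t i) := by
    have h := hc (P.indicator 1) (measurable_one.indicator hPm) x
    rw [lintegral_indicator_one hPm] at h
    rw [← h]
    have h2 : ∀ u : I → ℝ, P.indicator (1 : EuclideanSpace ℝ (Fin n) → ℝ≥0∞)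
        (x + ∑ i, u i • e i) = B.indicator 1 u := by
      intro u
      by_cases hu : u ∈ B
      · rw [Set.indicator_of_mem hu, Set.indicator_of_mem]
        · rfl
        · exact ⟨u, hu, rfl⟩
      · rw [Set.indicator_of_notMem hu, Set.indicator_of_notMem]
        rintro ⟨v, hv, hvu⟩
        exact hu (hinj hvu ▸ hv)
    simp_rw [h2]
    rw [lintegral_indicator_one (MeasurableSet.univ_pi (fun i => measurableSet_Ioo)),
      volume_pi_pi]
    refine Finset.prod_congr rfl fun i _ => ?_
    rw [Real.volume_Ioo]
    congr 1
    ring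
  calc volume (twistedRect e x t) ≤ volume P := measure_mono hsub
    _ = c⁻¹ * (c * volume P) := by
        rw [← mul_assoc, ENNReal.inv_mul_cancel c0.ne' c1.ne, one_mul]
    _ = _ := by
        rw [hvP, mul_assoc]
        congr 1
        rw [Finset.prod_coe_sort I (fun i => ENNReal.ofReal (2 * M * t i)), ← hI,
          ← Finset.prod_const, ← Finset.prod_mul_distrib]
        refine Finset.prod_congr rfl fun i _ => ?_
        rw [ENNReal.ofReal_mul (by positivity)]

lemma exists_dominant {n m : ℕ} (hnm : n ≤ m) (t : Fin m → ℝ) :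
    ∃ I : Finset (Fin m), I.card = n ∧ ∀ i ∈ I, ∀ j, j ∉ I → t j ≤ t i := by
  classical
  have hne : (Finset.powersetCard n (Finset.univ : Finset (Fin m))).Nonempty := by
    rw [Finset.powersetCard_nonempty]; simpa using hnm
  obtain ⟨I, hI, hmax⟩ := Finset.exists_max_image _ (fun I => ∑ i ∈ I, t i) hne
  rw [Finset.mem_powersetCard] at hI
  refine ⟨I, hI.2, fun i hi j hj => ?_⟩
  have hj' : j ∉ I.erase i := fun h => hj (Finset.mem_of_mem_erase h)
  have := hmax (insert j (I.erase i)) (by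
    rw [Finset.mem_powersetCard]
    refine ⟨Finset.subset_univ _, ?_⟩
    rw [Finset.card_insert_of_notMem hj', Finset.card_erase_add_one hi, hI.2])
  rw [Finset.sum_insert hj', ← Finset.add_sum_erase I t hi] at this
  linarith

/-- Comparison of box averages with twisted rectangle averages. -/
lemma box_le_rect {n m : ℕ} (hnm : n ≤ m) (e : Fin m → EuclideanSpace ℝ (Fin n))
    (hindep : ∀ s : Finset (Fin m), s.card = n → LinearIndependent ℝ (fun i : s => e i)) :
    ∃ (C : ℝ≥0∞) (W : (Fin m → ℝ) → ℝ≥0∞), C < ∞ ∧ Measurable W ∧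
      (∀ x t, (∀ j, 0 < t j) →
        W t ≤ (∏ j, ENNReal.ofReal (t j)) / volume (twistedRect e x t)) ∧
      ∀ (x : EuclideanSpace ℝ (Fin n)) (t : Fin m → ℝ), (∀ j, 0 < t j) →
      ∀ (φ : EuclideanSpace ℝ (Fin n) → ℝ≥0∞), Measurable φ →
        ∫⁻ s : Fin m → ℝ, (∏ j, (Set.Ioo (-t j) (t j)).indicator 1 (s j)) *
          φ (x + ∑ j, s j • e j) ≤ C * (W t * ∫⁻ z, φ z) := by
  classical
  set S := Finset.powersetCard n (Finset.univ : Finset (Fin m)) with hS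
  have hne : S.Nonempty := by
    rw [hS, Finset.powersetCard_nonempty]; simpa using hnm
  have hmem : ∀ I, I ∈ S ↔ I.card = n := by intro I; simp [hS, Finset.mem_powersetCard]
  have hA : ∀ I : Finset (Fin m), ∃ C : ℝ≥0∞, C < ∞ ∧ (I ∈ S →
      ∀ (x : EuclideanSpace ℝ (Fin n)) (t : Fin m → ℝ), (∀ j, 0 < t j) →
      (∀ i ∈ I, ∀ j, j ∉ I → t j ≤ t i) →
      volume (twistedRect e x t) ≤ C * ∏ i ∈ I, ENNReal.ofReal (t i)) := by
    intro I
    by_cases h : I ∈ S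
    · obtain ⟨C, h1, h2⟩ := vol_rect_aux e I ((hmem I).1 h) (hindep I ((hmem I).1 h))
      exact ⟨C, h1, fun _ => h2⟩
    · exact ⟨0, by simp, fun h' => absurd h' h⟩
  choose A hA1 hA2 using hA
  have hD : ∀ I : Finset (Fin m), ∃ C : ℝ≥0∞, C < ∞ ∧ (I ∈ S →
      ∀ (w : Fin m → ℝ → ℝ≥0∞), (∀ j, Measurable (w j)) → (∀ j s, w j s ≤ 1) →
      ∀ (φ : EuclideanSpace ℝ (Fin n) → ℝ≥0∞), Measurable φ → ∀ y,
      ∫⁻ s : Fin m → ℝ, (∏ j, w j (s j)) * φ (y + ∑ j, s j • e j)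
        ≤ (∏ j ∈ Iᶜ, ∫⁻ s, w j s) * (C * ∫⁻ z, φ z)) := by
    intro I
    by_cases h : I ∈ S
    · obtain ⟨C, h0, h1, h2⟩ := lint_split e I ((hmem I).1 h) (hindep I ((hmem I).1 h))
      exact ⟨C, h1, fun _ => h2⟩
    · exact ⟨0, by simp, fun h' => absurd h' h⟩
  choose D hD1 hD2 using hD
  set a : ℝ≥0∞ := 1 + ∑ I ∈ S, A I with ha
  set d : ℝ≥0∞ := 2 ^ m * ∑ I ∈ S, D I with hd
  have ha1 : a ≠ ∞ := by
    simp only [ha, ne_eq, ENNReal.add_eq_top, ENNReal.sum_eq_top]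
    rintro (h | ⟨I, -, h⟩)
    · simp at h
    · exact (hA1 I).ne h
  have ha0 : a ≠ 0 := by simp [ha]
  have hd1 : d < ∞ := by
    refine ENNReal.mul_lt_top (by simp) ?_
    rw [ENNReal.sum_lt_top]
    exact fun I _ => hD1 I
  let W : (Fin m → ℝ) → ℝ≥0∞ := fun t => a⁻¹ * S.inf' hne (fun I => ∏ j ∈ Iᶜ, ENNReal.ofReal (t j))
  refine ⟨d * a, W, ENNReal.mul_lt_top hd1 ha1.lt_top, ?_, ?_, ?_⟩
  · refine Measurable.const_mul ?_ _
    have : (fun t : Fin m → ℝ => S.inf' hne (fun I => ∏ j ∈ Iᶜ, ENNReal.ofReal (t j)))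
      = S.inf' hne (fun I => fun t : Fin m → ℝ => ∏ j ∈ Iᶜ, ENNReal.ofReal (t j)) := by
      ext t; rw [Finset.inf'_apply]
    rw [this]
    refine Finset.inf'_induction hne _ (fun _ h1 _ h2 => h1.inf h2) ?_
    intro I _
    exact Finset.measurable_prod _ (fun i _ => by fun_prop)
  · intro x t ht
    obtain ⟨I, hI, hdom⟩ := exists_dominant hnm t
    have hIS := (hmem I).2 hI
    have h1 : W t ≤ a⁻¹ * ∏ j ∈ Iᶜ, ENNReal.ofReal (t j) := by
      simp only [W]
      gcongr
      exact Finset.inf'_le (fun I => ∏ j ∈ Iᶜ, ENNReal.ofReal (t j)) hIS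
    refine h1.trans ?_
    have hAa : A I ≤ a := by
      rw [ha]
      exact (Finset.single_le_sum (f := A) (fun _ _ => zero_le) hIS).trans le_add_self
    have hp0 : ∏ i ∈ I, ENNReal.ofReal (t i) ≠ 0 := by
      rw [Finset.prod_ne_zero_iff]
      intro i _
      simp [ht i]
    have hpt : ∏ i ∈ I, ENNReal.ofReal (t i) ≠ ∞ :=
      ENNReal.prod_ne_top (fun i _ => ENNReal.ofReal_ne_top)
    calc _ = (∏ j, ENNReal.ofReal (t j)) / (a * ∏ i ∈ I, ENNReal.ofReal (t i)) := by
          rw [← Finset.prod_mul_prod_compl I, mul_comm a, ENNReal.mul_div_mul_left _ _ hp0 hpt,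
            ENNReal.div_eq_inv_mul]
      _ ≤ _ := by
          gcongr
          exact (hA2 I hIS x t ht hdom).trans (by gcongr)
  · intro x t ht φ hφ
    obtain ⟨I, hIS, hmin⟩ := Finset.exists_mem_eq_inf' hne
      (fun I => ∏ j ∈ Iᶜ, ENNReal.ofReal (t j))
    have hWt : a * W t = ∏ j ∈ Iᶜ, ENNReal.ofReal (t j) := by
      simp only [W]
      rw [hmin, ← mul_assoc, ENNReal.mul_inv_cancel ha0 ha1, one_mul]
    have h := hD2 I hIS (fun j => (Set.Ioo (-t j) (t j)).indicator 1)
      (fun j => measurable_one.indicator measurableSet_Ioo)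
      (fun j s => Set.indicator_le_self' (by simp) s) φ hφ x
    refine h.trans ?_
    have hDd : D I ≤ ∑ I ∈ S, D I := Finset.single_le_sum (f := D) (fun _ _ => zero_le) hIS
    calc _ ≤ (2 ^ m * ∏ j ∈ Iᶜ, ENNReal.ofReal (t j)) * ((∑ I ∈ S, D I) * ∫⁻ z, φ z) := by
          gcongr
          calc _ = ∏ j ∈ Iᶜ, (2 * ENNReal.ofReal (t j)) := by
                refine Finset.prod_congr rfl fun j _ => ?_
                rw [lintegral_indicator_one measurableSet_Ioo, Real.volume_Ioo,
                  show t j - -t j = 2 * t j by ring, ENNReal.ofReal_mul (by norm_num)]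
                simp
            _ = 2 ^ (Iᶜ).card * ∏ j ∈ Iᶜ, ENNReal.ofReal (t j) := by
                rw [Finset.prod_mul_distrib, Finset.prod_const]
            _ ≤ _ := by
                gcongr
                · norm_num
                · exact (Finset.card_le_univ _).trans (by simp)
      _ = _ := by
          rw [← hWt, hd]
          ring

/-! ### Part 2: the kernels -/

/-- The Poisson kernel (`none`) and its `s`- (`some true`) and `t`-derivative (`some false`). -/
def kk (o : Option Bool) (t s : ℝ) : ℝ :=
  match o with
  | none => poisson t s
  | some true => (1 / Real.pi) * (-(2 * s * t) / (t ^ 2 + s ^ 2) ^ 2)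
  | some false => (1 / Real.pi) * ((s ^ 2 - t ^ 2) / (t ^ 2 + s ^ 2) ^ 2)

lemma kk_measurable (o : Option Bool) : Measurable (fun p : ℝ × ℝ => kk o p.1 p.2) := by
  rcases o with _ | _ | _ <;> simp only [kk, poisson] <;> fun_prop

lemma kk_deriv_s {t : ℝ} (ht : 0 < t) (s : ℝ) :
    HasDerivAt (fun s => kk none t s) (kk (some true) t s) s := by
  simp only [kk, poisson]
  have h : t ^ 2 + s ^ 2 ≠ 0 := by positivity
  have h1 : HasDerivAt (fun s : ℝ => t ^ 2 + s ^ 2) (2 * s) s := by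
    simpa using (hasDerivAt_pow 2 s).const_add (t ^ 2)
  exact (((hasDerivAt_const s t).div h1 h).const_mul (1 / Real.pi)).congr_deriv (by ring)

lemma kk_deriv_t {t : ℝ} (ht : 0 < t) (s : ℝ) :
    HasDerivAt (fun t => kk none t s) (kk (some false) t s) t := by
  simp only [kk, poisson]
  have h : t ^ 2 + s ^ 2 ≠ 0 := by positivity
  have h1 : HasDerivAt (fun t : ℝ => t ^ 2 + s ^ 2) (2 * t) t := by
    simpa using (hasDerivAt_pow 2 t).add_const (s ^ 2)
  exact (((hasDerivAt_id t).div h1 h).const_mul (1 / Real.pi)).congr_deriv (by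
    simp only [id]; ring)

lemma kk_abs_le (o : Option Bool) {t : ℝ} (ht : 0 < t) (s : ℝ) :
    |kk o t s| ≤ (t + 1) / (t ^ 2 + s ^ 2) := by
  have hpi : |1 / Real.pi| ≤ 1 := by
    rw [abs_of_pos (by positivity), div_le_one Real.pi_pos]
    linarith [Real.pi_gt_three]
  have h : 0 < t ^ 2 + s ^ 2 := by positivity
  have key : ∀ q : ℝ, |q| ≤ (t + 1) * (t ^ 2 + s ^ 2) →
      |(1 / Real.pi) * (q / (t ^ 2 + s ^ 2) ^ 2)| ≤ (t + 1) / (t ^ 2 + s ^ 2) := by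
    intro q hq
    rw [abs_mul, abs_div q, abs_of_pos (pow_pos h 2)]
    calc _ ≤ 1 * (((t + 1) * (t ^ 2 + s ^ 2)) / (t ^ 2 + s ^ 2) ^ 2) := by gcongr
      _ = _ := by field_simp
  rcases o with _ | _ | _
  · simp only [kk, poisson]
    rw [show t / (t ^ 2 + s ^ 2) = (t * (t ^ 2 + s ^ 2)) / (t ^ 2 + s ^ 2) ^ 2 by field_simp]
    apply key
    rw [abs_of_pos (by positivity)]
    gcongr
    linarith
  · apply key
    rw [abs_le]
    constructor <;> nlinarith [mul_pos ht h, sq_nonneg s, sq_nonneg t]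
  · apply key
    rw [abs_le]
    constructor <;> nlinarith [mul_pos ht h, sq_nonneg (s - t), sq_nonneg (s + t)]

/-- locally uniform bound -/
lemma kk_bound (o : Option Bool) {a b r t s s' : ℝ} (ha : 0 < a) (h1 : a ≤ t) (h2 : t ≤ b)
    (hr : |s' - s| ≤ r) :
    |kk o t s'| ≤ ((b + 1) * (2 + (1 + 2 * r ^ 2) / a ^ 2)) * (1 / (1 + s ^ 2)) := by
  have ht : 0 < t := ha.trans_le h1
  refine (kk_abs_le o ht s').trans ?_
  have h0 : (s' - s) ^ 2 ≤ r ^ 2 := by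
    rw [← sq_abs (s' - s)]; gcongr
  have hs : 1 + s ^ 2 ≤ (2 + (1 + 2 * r ^ 2) / a ^ 2) * (t ^ 2 + s' ^ 2) := by
    have h3 : s ^ 2 ≤ 2 * s' ^ 2 + 2 * r ^ 2 := by nlinarith [sq_nonneg (2 * s' - s)]
    have h4 : (1 + 2 * r ^ 2) ≤ (1 + 2 * r ^ 2) / a ^ 2 * t ^ 2 := by
      rw [div_mul_eq_mul_div, le_div_iff₀ (by positivity)]
      gcongr
    have h5 : 0 ≤ (1 + 2 * r ^ 2) / a ^ 2 * s' ^ 2 := by positivity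
    nlinarith [sq_nonneg t]
  rw [mul_one_div, div_le_div_iff₀ (by positivity) (by positivity)]
  have hb : t + 1 ≤ b + 1 := by linarith
  calc (t + 1) * (1 + s ^ 2) ≤ (b + 1) * ((2 + (1 + 2 * r ^ 2) / a ^ 2) * (t ^ 2 + s' ^ 2)) := by
        gcongr
        linarith
    _ = _ := by ring

/-- the kernel as real/imaginary part of a holomorphic function -/
lemma kk_complex (b : Bool) (t s : ℝ) :
    kk (some b) t s = (((if b then -Complex.I else 1) * ((Real.pi : ℂ))⁻¹ *
      (((s : ℂ) + t * Complex.I) ^ 2)⁻¹)).re := by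
  have h : Complex.normSq (((s : ℂ) + t * Complex.I) ^ 2) = (t ^ 2 + s ^ 2) ^ 2 := by
    rw [map_pow, Complex.normSq_add_mul_I]; ring
  cases b
  · simp only [kk, Bool.false_eq_true, if_false, one_mul]
    rw [← Complex.ofReal_inv, Complex.re_ofReal_mul, Complex.inv_re, h]
    simp [pow_two]
  · simp only [kk, if_true]
    rw [← Complex.ofReal_inv, mul_comm (-Complex.I), mul_assoc (_ : ℂ) (-Complex.I), Complex.re_ofReal_mul]
    rw [neg_mul, Complex.neg_re, Complex.I_mul_re, Complex.inv_im, h]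
    simp [pow_two]
    ring

/-- solid mean value property for holomorphic functions -/
lemma disc_mean {f : ℂ → ℂ} {c : ℂ} {R : ℝ} (hR : 0 < R)
    (hf : DifferentiableOn ℂ f (Metric.closedBall c R)) :
    ∫ z in Metric.ball (0 : ℂ) R, f (c + z) = (Real.pi * R ^ 2 : ℝ) • f c := by
  rw [← integral_indicator measurableSet_ball, ← Complex.integral_comp_polarCoord_symm]
  have h1 : ∀ p ∈ polarCoord.target, p.1 • (Metric.ball (0 : ℂ) R).indicator (fun z => f (c + z))
      (Complex.polarCoord.symm p) =
      (Set.Ioo 0 R ×ˢ Set.Ioo (-Real.pi) Real.pi).indicator (fun p : ℝ × ℝ => p.1 •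
        f (circleMap c p.1 p.2)) p := by
    rintro ⟨r, θ⟩ hp
    simp only [polarCoord_target, Set.mem_prod, Set.mem_Ioi, Set.mem_Ioo] at hp
    have hz : Complex.polarCoord.symm (r, θ) = circleMap 0 r θ := by
      rw [Complex.polarCoord_symm_apply, circleMap, Complex.exp_mul_I]; simp
    have hc : c + circleMap 0 r θ = circleMap c r θ := by simp [circleMap]
    rw [hz]
    by_cases hr : r < R
    · rw [Set.indicator_of_mem, Set.indicator_of_mem]
      · simp only [hc]
      · simp only [Set.mem_prod, Set.mem_Ioo]; exact ⟨⟨hp.1, hr⟩, hp.2⟩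
      · simp [abs_of_pos hp.1, hr]
    · rw [Set.indicator_of_notMem, Set.indicator_of_notMem]
      · simp
      · simp only [Set.mem_prod, Set.mem_Ioo]; tauto
      · simpa [abs_of_pos hp.1] using hr
  rw [setIntegral_congr_fun polarCoord.open_target.measurableSet h1,
    setIntegral_indicator (measurableSet_Ioo.prod measurableSet_Ioo)]
  have h2 : polarCoord.target ∩ Set.Ioo 0 R ×ˢ Set.Ioo (-Real.pi) Real.pi
      = Set.Ioo 0 R ×ˢ Set.Ioo (-Real.pi) Real.pi := by
    rw [Set.inter_eq_right, polarCoord_target]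
    exact Set.prod_mono Set.Ioo_subset_Ioi_self subset_rfl
  rw [h2, Measure.volume_eq_prod, setIntegral_prod]
  · have h3 : ∀ r ∈ Set.Ioo 0 R, ∫ θ in Set.Ioo (-Real.pi) Real.pi, r • f (circleMap c r θ)
        = (2 * Real.pi * r) • f c := by
      intro r hr
      rw [integral_smul]
      have hav : Real.circleAverage f c r = f c := by
        apply DiffContOnCl.circleAverage
        rw [abs_of_pos hr.1]
        apply DifferentiableOn.diffContOnCl
        refine hf.mono ?_
        rw [closure_ball _ hr.1.ne']
        exact Metric.closedBall_subset_closedBall hr.2.le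
      have hper : ∫ θ in Set.Ioo (-Real.pi) Real.pi, f (circleMap c r θ)
          = (2 * Real.pi) • f c := by
        rw [← hav, Real.circleAverage, smul_smul, mul_inv_cancel₀ (by positivity), one_smul,
          ← integral_Ioc_eq_integral_Ioo, ← intervalIntegral.integral_of_le (by linarith [Real.pi_pos])]
        have hp : Function.Periodic (fun θ => f (circleMap c r θ)) (2 * Real.pi) := by
          intro θ; simp only [periodic_circleMap c r θ]
        have := hp.intervalIntegral_add_eq (-Real.pi) 0
        rw [show -Real.pi + 2 * Real.pi = Real.pi by ring, zero_add] at this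
        exact this
      rw [hper, smul_smul]
      congr 1; ring
    rw [setIntegral_congr_fun measurableSet_Ioo h3, integral_smul_const]
    congr 1
    rw [integral_const_mul, ← integral_Ioc_eq_integral_Ioo,
      ← intervalIntegral.integral_of_le hR.le, integral_id]
    ring
  · have hcont : ContinuousOn (fun p : ℝ × ℝ => p.1 • f (circleMap c p.1 p.2))
        (Set.Icc 0 R ×ˢ Set.Icc (-Real.pi) Real.pi) := by
      refine continuousOn_fst.smul (hf.continuousOn.comp ?_ ?_)
      · apply Continuous.continuousOn
        simp only [circleMap]
        fun_prop
      · rintro ⟨r, θ⟩ ⟨hr, -⟩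
        simp only [Metric.mem_closedBall, dist_eq_norm, circleMap_sub_center]
        simp [abs_of_nonneg hr.1, hr.2]
    have := hcont.integrableOn_compact (μ := volume) (isCompact_Icc.prod isCompact_Icc)
    exact this.mono_set (Set.prod_mono Set.Ioo_subset_Icc_self Set.Ioo_subset_Icc_self)

/-- The disc of radius `R` around `(0,t)`, in coordinates `(σ, τ)`. -/
def disc (t : ℝ) : Set (ℝ × ℝ) := {p | p.1 ^ 2 + (p.2 - t) ^ 2 < (t / 2) ^ 2}

lemma disc_measurable (t : ℝ) : MeasurableSet (disc t) := by
  apply IsOpen.measurableSet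
  exact isOpen_lt (by fun_prop) (by fun_prop)

lemma disc_sub {t : ℝ} (ht : 0 < t) {p : ℝ × ℝ} (hp : p ∈ disc t) :
    |p.1| < t / 2 ∧ t / 2 < p.2 ∧ p.2 < 3 * t / 2 := by
  have h : p.1 ^ 2 + (p.2 - t) ^ 2 < (t / 2) ^ 2 := hp
  have h1 : |p.1| < t / 2 := abs_lt_of_sq_lt_sq (by nlinarith [sq_nonneg (p.2 - t)]) (by linarith)
  have h2 : |p.2 - t| < t / 2 := abs_lt_of_sq_lt_sq (by nlinarith [sq_nonneg p.1]) (by linarith)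
  rw [abs_lt] at h2
  exact ⟨h1, by linarith, by linarith⟩

lemma kk_mean (b : Bool) {t : ℝ} (ht : 0 < t) (s : ℝ) :
    ∫ p in disc t, kk (some b) p.2 (s + p.1) = (Real.pi * (t / 2) ^ 2) * kk (some b) t s := by
  set co : ℂ := (if b then -Complex.I else 1) * ((Real.pi : ℂ))⁻¹ with hco
  set F : ℂ → ℂ := fun w => co * (w ^ 2)⁻¹ with hF
  set c : ℂ := (s : ℂ) + t * Complex.I with hc
  have hR : 0 < t / 2 := by positivity
  have hne : ∀ w ∈ Metric.closedBall c (t / 2), w ≠ 0 := by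
    rintro w hw rfl
    rw [Metric.mem_closedBall, dist_eq_norm, zero_sub, norm_neg] at hw
    have h1 := Complex.abs_im_le_norm c
    have h2 : c.im = t := by simp [hc]
    rw [h2, abs_of_pos ht] at h1
    linarith
  have hd : DifferentiableOn ℂ F (Metric.closedBall c (t / 2)) := by
    intro w hw
    have := hne w hw
    apply DifferentiableAt.differentiableWithinAt
    refine DifferentiableAt.const_mul (DifferentiableAt.inv (by fun_prop) ?_) _
    positivity
  have hmean := disc_mean hR hd
  have hint : IntegrableOn (fun z => F (c + z)) (Metric.ball (0 : ℂ) (t / 2)) := by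
    have hcont : ContinuousOn (fun z => F (c + z)) (Metric.closedBall (0 : ℂ) (t / 2)) := by
      refine hd.continuousOn.comp (by fun_prop) ?_
      intro z hz
      simpa [dist_eq_norm] using hz
    exact (hcont.integrableOn_compact (isCompact_closedBall _ _)).mono_set
      Metric.ball_subset_closedBall
  have hre : ∫ z in Metric.ball (0 : ℂ) (t / 2), (F (c + z)).re
      = (Real.pi * (t / 2) ^ 2) * (F c).re := by
    have := Complex.reCLM.integral_comp_comm hint
    simp only [Complex.reCLM_apply] at this
    rw [this, hmean, Complex.smul_re, smul_eq_mul]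
  rw [kk_complex, ← hco, ← hc]
  rw [← hre, ← integral_indicator (disc_measurable t), ← integral_indicator measurableSet_ball,
    ← integral_add_left_eq_self _ ((0 : ℝ), t),
    ← Complex.volume_preserving_equiv_real_prod.integral_comp
      (MeasurableEquiv.measurableEmbedding _)]
  refine integral_congr_ae (Filter.Eventually.of_forall fun z => ?_)
  have hz : Complex.measurableEquivRealProd z = (z.re, z.im) := rfl
  have hmem : ((0 : ℝ), t) + Complex.measurableEquivRealProd z ∈ disc t ↔
      z ∈ Metric.ball (0 : ℂ) (t / 2) := by
    rw [hz, disc, mem_ball_zero_iff]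
    simp only [Prod.mk_add_mk, Set.mem_ofPred_eq, zero_add, add_sub_cancel_left]
    rw [← abs_of_pos hR, ← abs_of_nonneg (norm_nonneg z), ← sq_lt_sq, ← Complex.normSq_eq_norm_sq,
      Complex.normSq_apply, abs_of_pos hR, ← pow_two, ← pow_two]
  by_cases h : z ∈ Metric.ball (0 : ℂ) (t / 2)
  · simp only []
    rw [Set.indicator_of_mem h, Set.indicator_of_mem (hmem.2 h), kk_complex, ← hco, hF, hz]
    simp only [Prod.mk_add_mk]
    congr 4
    apply Complex.ext <;> simp [hc]
  · simp only []
    rw [Set.indicator_of_notMem h, Set.indicator_of_notMem (fun h' => h (hmem.1 h'))]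

lemma disc_volume {t : ℝ} (ht : 0 < t) :
    volume (disc t) = ENNReal.ofReal (Real.pi * (t / 2) ^ 2) := by
  have hR : 0 < t / 2 := by positivity
  rw [← lintegral_indicator_one (disc_measurable t),
    ← lintegral_add_left_eq_self _ ((0 : ℝ), t),
    ← Complex.volume_preserving_equiv_real_prod.lintegral_comp_emb
      (MeasurableEquiv.measurableEmbedding _)]
  have hmem : ∀ z : ℂ, ((0 : ℝ), t) + Complex.measurableEquivRealProd z ∈ disc t ↔
      z ∈ Metric.ball (0 : ℂ) (t / 2) := by
    intro z
    have hz : Complex.measurableEquivRealProd z = (z.re, z.im) := rfl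
    rw [hz, disc, mem_ball_zero_iff]
    simp only [Prod.mk_add_mk, Set.mem_ofPred_eq, zero_add, add_sub_cancel_left]
    rw [← abs_of_pos hR, ← abs_of_nonneg (norm_nonneg z), ← sq_lt_sq, ← Complex.normSq_eq_norm_sq,
      Complex.normSq_apply, abs_of_pos hR, ← pow_two, ← pow_two]
  have : ∀ z : ℂ, (disc t).indicator (1 : ℝ × ℝ → ℝ≥0∞)
      (((0 : ℝ), t) + Complex.measurableEquivRealProd z) =
      (Metric.ball (0 : ℂ) (t / 2)).indicator 1 z := by
    intro z
    by_cases h : z ∈ Metric.ball (0 : ℂ) (t / 2)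
    · rw [Set.indicator_of_mem h, Set.indicator_of_mem ((hmem z).2 h)]; rfl
    · rw [Set.indicator_of_notMem h, Set.indicator_of_notMem (fun h' => h ((hmem z).1 h'))]
  simp_rw [this]
  rw [lintegral_indicator_one measurableSet_ball, Complex.volume_ball,
    ENNReal.ofReal_mul Real.pi_pos.le, ENNReal.ofReal_pow hR.le, mul_comm]
  congr 1
  rw [← NNReal.coe_real_pi, ENNReal.ofReal_coe_nnreal]

/-! ### Part 3: integrability and derivatives -/

/-- integrability of the translates against the weight `∏ 1/(1+s_j²)` -/
def Good {n m : ℕ} (e : Fin m → EuclideanSpace ℝ (Fin n)) (f : EuclideanSpace ℝ (Fin n) → ℝ) :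
    Prop :=
  Measurable f ∧ ∀ y, Integrable (fun s : Fin m → ℝ => (∏ j, (1 / (1 + s j ^ 2))) *
    f (y - ∑ j, s j • e j))

lemma meas_comb {n m : ℕ} (e : Fin m → EuclideanSpace ℝ (Fin n)) :
    Measurable (fun s : Fin m → ℝ => ∑ j, s j • e j) := by
  apply Continuous.measurable; fun_prop

lemma good_of_integrable {n m : ℕ} (hnm : n ≤ m) (e : Fin m → EuclideanSpace ℝ (Fin n))
    (hindep : ∀ s : Finset (Fin m), s.card = n → LinearIndependent ℝ (fun i : s => e i))
    {f : EuclideanSpace ℝ (Fin n) → ℝ} (hf : Integrable f) (hm : Measurable f) : Good e f := by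
  refine ⟨hm, fun y => ?_⟩
  obtain ⟨I, -, hI⟩ := Finset.exists_subset_card_eq (s := (Finset.univ : Finset (Fin m)))
    (n := n) (by simpa using hnm)
  obtain ⟨c, c0, c1, hc⟩ := lint_split e I hI (hindep I hI)
  have hw : ∀ s : ℝ, 0 ≤ 1 / (1 + s ^ 2) := fun s => by positivity
  have h := hc (fun _ s => ENNReal.ofReal (1 / (1 + s ^ 2))) (fun j => by fun_prop)
    (fun j s => by
      rw [ENNReal.ofReal_le_one, div_le_one (by positivity)]
      nlinarith [sq_nonneg s])
    (fun z => ‖f (-z)‖ₑ) (by fun_prop) (-y)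
  refine ⟨?_, ?_⟩
  · apply Measurable.aestronglyMeasurable
    apply Measurable.mul
    · fun_prop
    · exact hm.comp (measurable_const.sub (meas_comb e))
  · rw [HasFiniteIntegral]
    refine lt_of_le_of_lt (le_of_eq ?_) (h.trans_lt ?_)
    · congr 1
      funext s
      rw [enorm_mul, ← ENNReal.ofReal_prod_of_nonneg (fun j _ => hw _), Real.enorm_eq_ofReal
        (Finset.prod_nonneg fun j _ => hw _)]
      congr 3
      abel
    · apply ENNReal.mul_lt_top
      · apply ENNReal.prod_lt_top
        intro j _
        have := (integrable_inv_one_add_sq).hasFiniteIntegral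
        rw [HasFiniteIntegral] at this
        refine lt_of_le_of_lt (le_of_eq ?_) this
        congr 1
        funext s
        rw [← Real.enorm_eq_ofReal (hw s), one_div]
      · refine ENNReal.mul_lt_top c1 ?_
        rw [lintegral_neg_eq_self (fun z => ‖f z‖ₑ)]
        exact hf.hasFiniteIntegral

lemma Good.int {n m : ℕ} {e : Fin m → EuclideanSpace ℝ (Fin n)}
    {f : EuclideanSpace ℝ (Fin n) → ℝ} (G : Good e f) (y : EuclideanSpace ℝ (Fin n))
    {K : (Fin m → ℝ) → ℝ} (hK : Measurable K) (D : ℝ)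
    (hD : ∀ s, |K s| ≤ D * ∏ j, (1 / (1 + s j ^ 2))) :
    Integrable (fun s : Fin m → ℝ => K s * f (y - ∑ j, s j • e j)) := by
  refine Integrable.mono ((G.2 y).const_mul D) ?_ ?_
  · exact (hK.mul (G.1.comp (measurable_const.sub (meas_comb e)))).aestronglyMeasurable
  · refine Filter.Eventually.of_forall fun s => ?_
    rw [Real.norm_eq_abs, Real.norm_eq_abs, abs_mul, ← mul_assoc, abs_mul (_ * _) (f _)]
    exact mul_le_mul_of_nonneg_right ((hD s).trans (le_abs_self _)) (abs_nonneg _)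

/-- sum map surjective -/
lemma comb_surj {n m : ℕ} (hnm : n ≤ m) (e : Fin m → EuclideanSpace ℝ (Fin n))
    (hindep : ∀ s : Finset (Fin m), s.card = n → LinearIndependent ℝ (fun i : s => e i)) :
    Function.Surjective (Fintype.linearCombination ℝ e) := by
  obtain ⟨I, -, hI⟩ := Finset.exists_subset_card_eq (s := (Finset.univ : Finset (Fin m)))
    (n := n) (by simpa using hnm)
  have h1 := (hindep I hI).span_eq_top_of_card_eq_finrank' (by simp [hI])
  rw [← LinearMap.range_eq_top, Fintype.range_linearCombination, eq_top_iff, ← h1]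
  apply Submodule.span_mono
  rintro _ ⟨i, rfl⟩
  exact ⟨i, rfl⟩

lemma iterP_congr {n m : ℕ} (hnm : n ≤ m) (e : Fin m → EuclideanSpace ℝ (Fin n))
    (hindep : ∀ s : Finset (Fin m), s.card = n → LinearIndependent ℝ (fun i : s => e i))
    {f f' : EuclideanSpace ℝ (Fin n) → ℝ} (h : f =ᵐ[volume] f') : iterP e f = iterP e f' := by
  funext x t
  unfold iterP
  apply integral_congr_ae
  have h1 : ∀ᵐ z : EuclideanSpace ℝ (Fin n), f (x - z) = f' (x - z) :=
    (Measure.measurePreserving_sub_left volume x).quasiMeasurePreserving.ae_eq_comp h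
  obtain ⟨N, hN, hNm, hN0⟩ := exists_measurable_superset_of_null (ae_iff.1 h1)
  have h2 := (ae_comp_linearMap_mem_iff (Fintype.linearCombination ℝ e) volume volume
    (comb_surj hnm e hindep) hNm.compl).2 (by
      rw [ae_iff]; simpa using hN0)
  filter_upwards [h2] with s hs
  have : f (x - ∑ j, s j • e j) = f' (x - ∑ j, s j • e j) := by
    by_contra hne
    exact hs (hN hne)
  rw [this]

/-- the derivative kernels integrated against `f` -/
def VV {n m : ℕ} (e : Fin m → EuclideanSpace ℝ (Fin n)) (f : EuclideanSpace ℝ (Fin n) → ℝ)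
    (o : Fin m → Option Bool) (y : EuclideanSpace ℝ (Fin n)) (t : Fin m → ℝ) : ℝ :=
  ∫ s : Fin m → ℝ, (∏ j, kk (o j) (t j) (s j)) * f (y - ∑ j, s j • e j)

lemma VV_shift {n m : ℕ} (e : Fin m → EuclideanSpace ℝ (Fin n))
    (f : EuclideanSpace ℝ (Fin n) → ℝ) (o : Fin m → Option Bool) (y : EuclideanSpace ℝ (Fin n))
    (t σ : Fin m → ℝ) : VV e f o (y + ∑ j, σ j • e j) t =
      ∫ s : Fin m → ℝ, (∏ j, kk (o j) (t j) (s j + σ j)) * f (y - ∑ j, s j • e j) := by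
  unfold VV
  rw [← integral_add_right_eq_self _ σ]
  congr 1
  funext s
  congr 2
  simp only [Pi.add_apply, add_smul, Finset.sum_add_distrib]
  abel

lemma deriv_gen {n m : ℕ} {e : Fin m → EuclideanSpace ℝ (Fin n)}
    {f : EuclideanSpace ℝ (Fin n) → ℝ} (G : Good e f) (o : Fin m → Option Bool)
    (y : EuclideanSpace ℝ (Fin n)) (t : Fin m → ℝ) (ht : ∀ j, 0 < t j) (μ : Fin m)
    (k k' : ℝ → ℝ → ℝ) (r0 : ℝ) (U : Set ℝ) (hU : U ∈ nhds r0) (D : ℝ)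
    (hk : ∀ r ∈ U, ∀ s, HasDerivAt (fun r => k r s) (k' r s) r)
    (hb : ∀ r ∈ U, ∀ s, |k r s| ≤ D * (1 / (1 + s ^ 2)))
    (hb' : ∀ r ∈ U, ∀ s, |k' r s| ≤ D * (1 / (1 + s ^ 2)))
    (hm : ∀ r, Measurable (k r)) (hm' : ∀ r, Measurable (k' r)) :
    HasDerivAt (fun r => ∫ s : Fin m → ℝ, (k r (s μ) * ∏ j ∈ Finset.univ.erase μ,
        kk (o j) (t j) (s j)) * f (y - ∑ j, s j • e j))
      (∫ s : Fin m → ℝ, (k' r0 (s μ) * ∏ j ∈ Finset.univ.erase μ,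
        kk (o j) (t j) (s j)) * f (y - ∑ j, s j • e j)) r0 := by
  have hr0 : r0 ∈ U := mem_of_mem_nhds hU
  set c : Fin m → ℝ := fun j => (t j + 1) * (2 + (1 + 2 * (0:ℝ) ^ 2) / t j ^ 2) with hc
  have hkm : ∀ j, Measurable (fun s : Fin m → ℝ => kk (o j) (t j) (s j)) := fun j =>
    (kk_measurable (o j)).comp (measurable_const.prodMk (measurable_pi_apply j))
  have hcb : ∀ q : ℝ → ℝ, (∀ s, |q s| ≤ D * (1 / (1 + s ^ 2))) → ∀ s : Fin m → ℝ,
      |q (s μ) * ∏ j ∈ Finset.univ.erase μ, kk (o j) (t j) (s j)| ≤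
        (D * ∏ j ∈ Finset.univ.erase μ, c j) * ∏ j, (1 / (1 + s j ^ 2)) := by
    intro q hq s
    rw [abs_mul, Finset.abs_prod, ← Finset.mul_prod_erase Finset.univ _ (Finset.mem_univ μ)]
    calc _ ≤ (D * (1 / (1 + s μ ^ 2))) * ∏ j ∈ Finset.univ.erase μ, (c j * (1 / (1 + s j ^ 2))) := by
          apply mul_le_mul (hq _)
          · apply Finset.prod_le_prod (fun _ _ => abs_nonneg _)
            intro j _
            exact kk_bound (o j) (ht j) le_rfl le_rfl (by simp)
          · exact Finset.prod_nonneg (fun _ _ => abs_nonneg _)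
          · exact (abs_nonneg _).trans (hq _)
      _ = _ := by rw [Finset.prod_mul_distrib]; ring
  have hmm : ∀ q : ℝ → ℝ, Measurable q → Measurable (fun s : Fin m → ℝ =>
      q (s μ) * ∏ j ∈ Finset.univ.erase μ, kk (o j) (t j) (s j)) := by
    intro q hq
    exact (hq.comp (measurable_pi_apply μ)).mul (Finset.measurable_prod _ fun j _ => hkm j)
  have hfm : Measurable (fun s : Fin m → ℝ => f (y - ∑ j, s j • e j)) :=
    G.1.comp (measurable_const.sub (meas_comb e))
  refine (hasDerivAt_integral_of_dominated_loc_of_deriv_le (F' := fun r (s : Fin m → ℝ) =>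
    (k' r (s μ) * ∏ j ∈ Finset.univ.erase μ,
        kk (o j) (t j) (s j)) * f (y - ∑ j, s j • e j)) (bound := fun s : Fin m → ℝ =>
        |(D * ∏ j ∈ Finset.univ.erase μ, c j) * ((∏ j, (1 / (1 + s j ^ 2))) *
          f (y - ∑ j, s j • e j))|) hU ?_ ?_ ?_ ?_ ?_ ?_).2
  · exact Filter.Eventually.of_forall fun r => ((hmm _ (hm r)).mul hfm).aestronglyMeasurable
  · exact G.int y (hmm _ (hm r0)) _ (hcb _ (hb r0 hr0))
  · exact ((hmm _ (hm' r0)).mul hfm).aestronglyMeasurable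
  · refine Filter.Eventually.of_forall fun s r hr => ?_
    rw [Real.norm_eq_abs, abs_mul, ← mul_assoc, abs_mul (_ * _) (f _)]
    exact mul_le_mul_of_nonneg_right ((hcb _ (hb' r hr) s).trans (le_abs_self _)) (abs_nonneg _)
  · exact ((G.2 y).const_mul _).abs
  · refine Filter.Eventually.of_forall fun s r hr => ?_
    exact ((hk r hr (s μ)).mul_const _).mul_const _

lemma VV_deriv_t {n m : ℕ} {e : Fin m → EuclideanSpace ℝ (Fin n)}
    {f : EuclideanSpace ℝ (Fin n) → ℝ} (G : Good e f) (o : Fin m → Option Bool)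
    (y : EuclideanSpace ℝ (Fin n)) (t : Fin m → ℝ) (ht : ∀ j, 0 < t j) (μ : Fin m)
    (ho : o μ = none) :
    HasDerivAt (fun τ => VV e f o y (Function.update t μ τ))
      (VV e f (Function.update o μ (some false)) y t) (t μ) := by
  have h := deriv_gen G o y t ht μ (fun r s => kk none r s) (fun r s => kk (some false) r s) (t μ)
    (Set.Icc (t μ / 2) (2 * t μ)) (Icc_mem_nhds (by linarith [ht μ]) (by linarith [ht μ]))
    ((2 * t μ + 1) * (2 + (1 + 2 * (0:ℝ) ^ 2) / (t μ / 2) ^ 2))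
    (fun r hr s => kk_deriv_t (lt_of_lt_of_le (by linarith [ht μ]) hr.1) s)
    (fun r hr s => kk_bound none (by linarith [ht μ]) hr.1 hr.2 (by simp))
    (fun r hr s => kk_bound _ (by linarith [ht μ]) hr.1 hr.2 (by simp))
    (fun r => (kk_measurable none).comp (measurable_const.prodMk measurable_id))
    (fun r => (kk_measurable (some false)).comp (measurable_const.prodMk measurable_id))
  convert h using 1
  · funext τ
    unfold VV
    congr 1; funext s; congr 1
    rw [← Finset.mul_prod_erase Finset.univ _ (Finset.mem_univ μ)]
    congr 1
    · simp [ho]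
    · apply Finset.prod_congr rfl
      intro j hj
      rw [Function.update_of_ne (Finset.ne_of_mem_erase hj)]
  · unfold VV
    congr 1; funext s; congr 1
    rw [← Finset.mul_prod_erase Finset.univ _ (Finset.mem_univ μ)]
    congr 1
    · simp
    · apply Finset.prod_congr rfl
      intro j hj
      rw [Function.update_of_ne (Finset.ne_of_mem_erase hj)]

lemma VV_deriv_s {n m : ℕ} {e : Fin m → EuclideanSpace ℝ (Fin n)}
    {f : EuclideanSpace ℝ (Fin n) → ℝ} (G : Good e f) (o : Fin m → Option Bool)
    (y : EuclideanSpace ℝ (Fin n)) (t : Fin m → ℝ) (ht : ∀ j, 0 < t j) (μ : Fin m)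
    (ho : o μ = none) :
    HasDerivAt (fun r : ℝ => VV e f o (y + r • e μ) t)
      (VV e f (Function.update o μ (some true)) y t) 0 := by
  have h := deriv_gen G o y t ht μ (fun r s => kk none (t μ) (s + r))
    (fun r s => kk (some true) (t μ) (s + r)) 0
    (Set.Icc (-1) 1) (Icc_mem_nhds (by norm_num) (by norm_num))
    ((t μ + 1) * (2 + (1 + 2 * (1:ℝ) ^ 2) / (t μ) ^ 2))
    (fun r hr s => by simpa using (kk_deriv_s (ht μ) (s + r)).comp_const_add s r)
    (fun r hr s => kk_bound none (ht μ) le_rfl le_rfl (by simpa using abs_le.2 hr))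
    (fun r hr s => kk_bound _ (ht μ) le_rfl le_rfl (by simpa using abs_le.2 hr))
    (fun r => (kk_measurable none).comp (measurable_const.prodMk (measurable_id.add_const r)))
    (fun r => (kk_measurable (some true)).comp (measurable_const.prodMk (measurable_id.add_const r)))
  convert h using 1
  · funext r
    have h1 : r • e μ = ∑ j, (Pi.single μ r : Fin m → ℝ) j • e j := by
      rw [Finset.sum_eq_single μ] <;> simp +contextual [Pi.single_apply]
    rw [h1, VV_shift]
    congr 1; funext s; congr 1
    rw [← Finset.mul_prod_erase Finset.univ _ (Finset.mem_univ μ)]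
    congr 1
    · simp [ho]
    · apply Finset.prod_congr rfl
      intro j hj
      rw [Pi.single_eq_of_ne (Finset.ne_of_mem_erase hj), add_zero]
  · unfold VV
    congr 1; funext s; congr 1
    rw [← Finset.mul_prod_erase Finset.univ _ (Finset.mem_univ μ)]
    congr 1
    · simp
    · apply Finset.prod_congr rfl
      intro j hj
      rw [Function.update_of_ne (Finset.ne_of_mem_erase hj)]

lemma fold_VV {n m : ℕ} {e : Fin m → EuclideanSpace ℝ (Fin n)}
    {f : EuclideanSpace ℝ (Fin n) → ℝ} (G : Good e f) (α : Fin m → Bool) (l : List (Fin m)) :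
    ∀ (_ : l.Nodup) (o : Fin m → Option Bool) (_ : ∀ μ ∈ l, o μ = none)
      (h : EuclideanSpace ℝ (Fin n) → (Fin m → ℝ) → ℝ)
      (_ : ∀ y t, (∀ j, 0 < t j) → h y t = VV e f o y t),
      ∀ y t, (∀ j, 0 < t j) → l.foldl
    (fun h μ => if α μ then (fun x t => lineDeriv ℝ (fun y => h y t) x (e μ))
      else (fun x t => deriv (fun τ => h x (Function.update t μ τ)) (t μ))) h y t
      = VV e f (fun j => if j ∈ l then some (α j) else o j) y t := by
  induction l with
  | nil => intro _ o _ h hh y t ht; simpa using hh y t ht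
  | cons μ l ih =>
    intro hl o ho h hh y t ht
    rw [List.foldl_cons]
    rw [List.nodup_cons] at hl
    rw [ih hl.2 (Function.update o μ (some (α μ)))]
    · congr 1
      funext j
      by_cases hj : j = μ
      · subst hj; simp [hl.1]
      · simp [hj]
    · intro ν hν
      rw [Function.update_of_ne (by rintro rfl; exact hl.1 hν)]
      exact ho ν (by simp [hν])
    · intro y t ht
      have hoμ := ho μ (by simp)
      cases hα : α μ
      · simp only [Bool.false_eq_true, if_false]
        rw [← (VV_deriv_t G o y t ht μ hoμ).deriv]
        apply Filter.EventuallyEq.deriv_eq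
        filter_upwards [lt_mem_nhds (ht μ)] with τ hτ
        apply hh
        intro j
        by_cases hj : j = μ
        · subst hj; simpa using hτ
        · simpa [hj] using ht j
      · simp only [if_true]
        rw [← (VV_deriv_s G o y t ht μ hoμ).deriv, lineDeriv]
        congr 1
        funext r
        exact hh _ _ ht
    · exact ht

lemma Dmix_eq {n m : ℕ} {e : Fin m → EuclideanSpace ℝ (Fin n)}
    {f : EuclideanSpace ℝ (Fin n) → ℝ} (G : Good e f) (α : Fin m → Bool)
    (y : EuclideanSpace ℝ (Fin n)) (t : Fin m → ℝ) (ht : ∀ j, 0 < t j) :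
    Dmix e α (iterP e f) y t = VV e f (fun j => some (α j)) y t := by
  unfold Dmix
  rw [fold_VV G α _ (List.nodup_finRange m) (fun _ => none) (fun _ _ => rfl) (iterP e f)
    (fun _ _ _ => rfl) y t ht]
  simp

/-! ### Part 4: sub-mean value property on polydiscs -/

/-- Lebesgue measure on the polydisc. -/
def nu {m : ℕ} (t : Fin m → ℝ) : Measure (Fin m → ℝ × ℝ) :=
  Measure.pi (fun j => (volume : Measure (ℝ × ℝ)).restrict (disc (t j)))

lemma nu_eq {m : ℕ} (t : Fin m → ℝ) :
    nu t = (volume : Measure (Fin m → ℝ × ℝ)).restrict (Set.univ.pi fun j => disc (t j)) := by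
  rw [nu, volume_pi, Measure.restrict_pi_pi]

lemma nu_univ {m : ℕ} (t : Fin m → ℝ) (ht : ∀ j, 0 < t j) :
    nu t Set.univ = ∏ j, ENNReal.ofReal (Real.pi * (t j / 2) ^ 2) := by
  rw [nu_eq, Measure.restrict_apply_univ, volume_pi_pi]
  exact Finset.prod_congr rfl fun j _ => disc_volume (ht j)

lemma nu_finite {m : ℕ} (t : Fin m → ℝ) (ht : ∀ j, 0 < t j) : IsFiniteMeasure (nu t) :=
  ⟨by rw [nu_univ t ht]; exact ENNReal.prod_lt_top fun j _ => ENNReal.ofReal_lt_top⟩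

lemma nu_ae {m : ℕ} (t : Fin m → ℝ) : ∀ᵐ p ∂nu t, ∀ j, p j ∈ disc (t j) := by
  rw [nu_eq]
  filter_upwards [ae_restrict_mem (MeasurableSet.univ_pi fun j => disc_measurable (t j))] with p hp j
  exact hp j (Set.mem_univ j)

lemma cs_aux {X : Type*} [MeasurableSpace X] (ν : Measure X) (h : X → ℝ) (hh : Measurable h) :
    ENNReal.ofReal ((∫ x, h x ∂ν) ^ 2) ≤ ν Set.univ * ∫⁻ x, ENNReal.ofReal (h x ^ 2) ∂ν := by
  have e1 : ∀ r : ℝ, ENNReal.ofReal (r ^ 2) = ‖r‖ₑ ^ (2 : ℝ) := by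
    intro r
    rw [← sq_abs, ENNReal.ofReal_pow (abs_nonneg _), ← Real.enorm_eq_ofReal_abs]
    norm_cast
  have h1 := ENNReal.lintegral_mul_le_Lp_mul_Lq ν (p := 2) (q := 2)
    (by rw [Real.holderConjugate_iff]; norm_num) (f := fun _ => 1) (g := fun x => ‖h x‖ₑ)
    aemeasurable_const (by fun_prop)
  simp only [e1]
  calc ‖∫ x, h x ∂ν‖ₑ ^ (2 : ℝ) ≤ (∫⁻ x, ‖h x‖ₑ ∂ν) ^ (2 : ℝ) := by
        gcongr
        exact enorm_integral_le_lintegral_enorm _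
    _ ≤ ((ν Set.univ) ^ (1 / 2 : ℝ) * (∫⁻ x, ‖h x‖ₑ ^ (2 : ℝ) ∂ν) ^ (1 / 2 : ℝ)) ^ (2 : ℝ) := by
        gcongr
        simpa using h1
    _ = _ := by
        rw [ENNReal.mul_rpow_of_nonneg _ _ (by norm_num), ← ENNReal.rpow_mul, ← ENNReal.rpow_mul]
        norm_num

lemma VV_measurable {n m : ℕ} {e : Fin m → EuclideanSpace ℝ (Fin n)}
    {f : EuclideanSpace ℝ (Fin n) → ℝ} (hf : Measurable f) (o : Fin m → Option Bool) :
    Measurable (fun q : EuclideanSpace ℝ (Fin n) × (Fin m → ℝ) => VV e f o q.1 q.2) := by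
  apply StronglyMeasurable.measurable
  unfold VV
  apply StronglyMeasurable.integral_prod_right
    (f := fun (q : EuclideanSpace ℝ (Fin n) × (Fin m → ℝ)) (s : Fin m → ℝ) =>
      (∏ j, kk (o j) (q.2 j) (s j)) * f (q.1 - ∑ j, s j • e j))
  apply Measurable.stronglyMeasurable
  apply Measurable.mul
  · refine Finset.measurable_prod _ fun j _ => ?_
    exact (kk_measurable (o j)).comp (Measurable.prodMk (by fun_prop) (by fun_prop))
  · exact hf.comp ((measurable_fst.comp measurable_fst).sub ((meas_comb e).comp measurable_snd))

lemma meas_pt {n m : ℕ} (e : Fin m → EuclideanSpace ℝ (Fin n)) (x : EuclideanSpace ℝ (Fin n)) :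
    Measurable (fun p : Fin m → ℝ × ℝ => ((x + ∑ j, (p j).1 • e j, fun j => (p j).2) :
      EuclideanSpace ℝ (Fin n) × (Fin m → ℝ))) := by
  apply Continuous.measurable; fun_prop

lemma VV_mean {n m : ℕ} {e : Fin m → EuclideanSpace ℝ (Fin n)}
    {f : EuclideanSpace ℝ (Fin n) → ℝ} (G : Good e f) (α : Fin m → Bool)
    (x : EuclideanSpace ℝ (Fin n)) (t : Fin m → ℝ) (ht : ∀ j, 0 < t j) :
    ∫ p, VV e f (fun j => some (α j)) (x + ∑ j, (p j).1 • e j) (fun j => (p j).2) ∂nu t =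
      (∏ j, Real.pi * (t j / 2) ^ 2) * VV e f (fun j => some (α j)) x t := by
  have := nu_finite t ht
  simp only [VV_shift]
  rw [integral_integral_swap]
  · rw [VV, ← integral_const_mul]
    congr 1
    funext s
    rw [integral_mul_const, ← mul_assoc, ← Finset.prod_mul_distrib]
    congr 1
    rw [nu, integral_fintype_prod_eq_prod (fun j (p : ℝ × ℝ) => kk (some (α j)) p.2 (s j + p.1))]
    exact Finset.prod_congr rfl fun j _ => kk_mean (α j) (ht j) (s j)
  · set c : Fin m → ℝ := fun j => (3 * t j / 2 + 1) * (2 + (1 + 2 * (t j / 2) ^ 2) / (t j / 2) ^ 2)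
      with hc
    have hI := ((G.2 x).const_mul (∏ j, c j)).comp_snd (nu t)
    refine hI.mono ?_ ?_
    · apply Measurable.aestronglyMeasurable
      apply Measurable.mul
      · refine Finset.measurable_prod _ fun j _ => ?_
        exact (kk_measurable _).comp (Measurable.prodMk (by fun_prop) (by fun_prop))
      · exact G.1.comp (measurable_const.sub ((meas_comb e).comp measurable_snd))
    · filter_upwards [Measure.quasiMeasurePreserving_fst.ae (nu_ae t)] with q hq
      simp only [Function.uncurry]
      rw [Real.norm_eq_abs, Real.norm_eq_abs, abs_mul, ← mul_assoc, abs_mul (_ * _) (f _)]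
      refine mul_le_mul_of_nonneg_right (le_trans ?_ (le_abs_self _)) (abs_nonneg _)
      rw [Finset.abs_prod, ← Finset.prod_mul_distrib]
      refine Finset.prod_le_prod (fun _ _ => abs_nonneg _) fun j _ => ?_
      have hd := disc_sub (ht j) (hq j)
      exact kk_bound _ (by linarith [ht j]) hd.2.1.le hd.2.2.le (by simpa using hd.1.le)

/-- the squared gradient, extended-real valued -/
def HH {n m : ℕ} (e : Fin m → EuclideanSpace ℝ (Fin n)) (f : EuclideanSpace ℝ (Fin n) → ℝ)
    (q : EuclideanSpace ℝ (Fin n) × (Fin m → ℝ)) : ℝ≥0∞ :=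
  ∑ α : Fin m → Bool, ENNReal.ofReal (VV e f (fun j => some (α j)) q.1 q.2 ^ 2)

lemma HH_measurable {n m : ℕ} {e : Fin m → EuclideanSpace ℝ (Fin n)}
    {f : EuclideanSpace ℝ (Fin n) → ℝ} (hf : Measurable f) : Measurable (HH e f) := by
  unfold HH
  exact Finset.measurable_sum _ fun α _ => ((VV_measurable hf _).pow_const 2).ennreal_ofReal

lemma gradSq_eq {n m : ℕ} {e : Fin m → EuclideanSpace ℝ (Fin n)}
    {f : EuclideanSpace ℝ (Fin n) → ℝ} (G : Good e f)
    (x : EuclideanSpace ℝ (Fin n)) (t : Fin m → ℝ) (ht : ∀ j, 0 < t j) :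
    ENNReal.ofReal (gradSq e f x t) = HH e f (x, t) := by
  unfold gradSq HH
  rw [ENNReal.ofReal_sum_of_nonneg (fun _ _ => sq_nonneg _)]
  exact Finset.sum_congr rfl fun α _ => by rw [Dmix_eq G α x t ht]

lemma HH_mean {n m : ℕ} {e : Fin m → EuclideanSpace ℝ (Fin n)}
    {f : EuclideanSpace ℝ (Fin n) → ℝ} (G : Good e f)
    (x : EuclideanSpace ℝ (Fin n)) (t : Fin m → ℝ) (ht : ∀ j, 0 < t j) :
    HH e f (x, t) ≤ (∏ j, ENNReal.ofReal (Real.pi * (t j / 2) ^ 2))⁻¹ *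
      ∫⁻ p, HH e f (x + ∑ j, (p j).1 • e j, fun j => (p j).2) ∂nu t := by
  have hmeas : ∀ α : Fin m → Bool, Measurable (fun p : Fin m → ℝ × ℝ =>
      VV e f (fun j => some (α j)) (x + ∑ j, (p j).1 • e j) (fun j => (p j).2)) := fun α =>
    (VV_measurable G.1 _).comp (meas_pt e x)
  unfold HH
  rw [lintegral_finsetSum _ (fun α _ => ((hmeas α).pow_const 2).ennreal_ofReal), Finset.mul_sum]
  refine Finset.sum_le_sum fun α _ => ?_
  have h := cs_aux (nu t) _ (hmeas α)
  rw [VV_mean G α x t ht, nu_univ t ht, mul_pow, ENNReal.ofReal_mul (sq_nonneg _),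
    ENNReal.ofReal_pow (Finset.prod_nonneg fun j _ => by positivity),
    ENNReal.ofReal_prod_of_nonneg (fun j _ => by positivity)] at h
  set M := ∏ j, ENNReal.ofReal (Real.pi * (t j / 2) ^ 2) with hM
  have hM0 : M ≠ 0 := by
    rw [hM, Finset.prod_ne_zero_iff]
    intro j _
    have := ht j
    exact (ENNReal.ofReal_pos.2 (by positivity)).ne'
  have hMt : M ≠ ∞ := (ENNReal.prod_lt_top fun j _ => ENNReal.ofReal_lt_top).ne
  rw [sq, mul_assoc, ENNReal.mul_le_mul_iff_right hM0 hMt] at h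
  rw [← ENNReal.div_eq_inv_mul, ENNReal.le_div_iff_mul_le (Or.inl hM0) (Or.inl hMt), mul_comm]
  exact h

/-! ### Part 5: conclusion -/

lemma ntCone_measurable {n m : ℕ} (hnm : n ≤ m) (e : Fin m → EuclideanSpace ℝ (Fin n))
    (hindep : ∀ s : Finset (Fin m), s.card = n → LinearIndependent ℝ (fun i : s => e i))
    (x : EuclideanSpace ℝ (Fin n)) : MeasurableSet (ntCone e 1 x) := by
  apply IsOpen.measurableSet
  have h1 : IsOpenMap (Fintype.linearCombination ℝ e) :=
    LinearMap.isOpenMap_of_finiteDimensional _ (comb_surj hnm e hindep)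
  have h2 : IsOpenMap (fun v : Fin m → ℝ => x + Fintype.linearCombination ℝ e v) :=
    (Homeomorph.addLeft x).isOpenMap.comp h1
  have h3 := h2.prodMap (IsOpenMap.id (X := Fin m → ℝ))
  have h4 : IsOpen {q : (Fin m → ℝ) × (Fin m → ℝ) | ∀ j, |q.1 j| < q.2 j} := by
    simp only [Set.ofPred_forall]
    exact isOpen_iInter_of_finite fun j => isOpen_lt (by fun_prop) (by fun_prop)
  convert h3 _ h4 using 1
  ext ⟨z, τ⟩
  constructor
  · rintro ⟨-, v, hv, hz⟩
    exact ⟨(v, τ), fun j => by simpa using hv j, Prod.ext hz.symm rfl⟩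
  · rintro ⟨⟨v, τ'⟩, hv, hz⟩
    obtain ⟨rfl, rfl⟩ := Prod.ext_iff.1 hz
    exact ⟨fun j => (abs_nonneg _).trans_lt (hv j), v, fun j => by simpa using hv j, rfl⟩

/-- weight in `t` -/
def BB (q : ℝ × ℝ) : ℝ≥0∞ :=
  ({q : ℝ × ℝ | 2 * q.2 / 3 < q.1 ∧ q.1 < 2 * q.2} : Set (ℝ × ℝ)).indicator 1 q *
    ENNReal.ofReal (2 / q.2)

/-- indicator of `|σ| < τ` -/
def II (q : ℝ × ℝ) : ℝ≥0∞ := (Set.Ioo (-q.2) q.2).indicator 1 q.1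

lemma BB_measurable : Measurable BB := by
  unfold BB
  apply Measurable.mul
  · apply measurable_one.indicator
    exact (measurableSet_lt (f := fun q : ℝ × ℝ => 2 * q.2 / 3) (by fun_prop)
      measurable_fst).inter
      (measurableSet_lt (g := fun q : ℝ × ℝ => 2 * q.2) measurable_fst (by fun_prop))
  · fun_prop

lemma II_measurable : Measurable II := by
  have : II = ({q : ℝ × ℝ | -q.2 < q.1 ∧ q.1 < q.2} : Set (ℝ × ℝ)).indicator 1 := by
    funext q
    simp only [II, Set.indicator_apply]
    rfl
  rw [this]
  apply measurable_one.indicator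
  exact (measurableSet_lt measurable_snd.neg measurable_fst).inter
    (measurableSet_lt measurable_fst measurable_snd)

lemma BB_int (τ : ℝ) : ∫⁻ t, BB (t, τ) ≤ 3 := by
  have h : ∀ t, BB (t, τ) = (Set.Ioo (2 * τ / 3) (2 * τ)).indicator (fun _ => 1) t *
      ENNReal.ofReal (2 / τ) := by
    intro t; simp only [BB, Set.indicator_apply]; rfl
  simp only [h]
  rw [lintegral_mul_const' _ _ ENNReal.ofReal_ne_top, lintegral_indicator_const measurableSet_Ioo,
    Real.volume_Ioo, one_mul]
  rcases le_or_gt τ 0 with h0 | h0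
  · rw [ENNReal.ofReal_of_nonpos (div_nonpos_of_nonneg_of_nonpos (by norm_num) h0)]
    simp
  · rw [← ENNReal.ofReal_mul (by linarith)]
    apply ENNReal.ofReal_le_of_le_toReal
    have : (2 * τ - 2 * τ / 3) * (2 / τ) = 8 / 3 := by field_simp; norm_num
    rw [this]
    norm_num

lemma weight_le {t : ℝ} (ht : 0 < t) {p : ℝ × ℝ} (hp : p ∈ disc t) :
    ENNReal.ofReal t * (ENNReal.ofReal (Real.pi * (t / 2) ^ 2))⁻¹ ≤ BB (t, p.2) * II p := by
  obtain ⟨h1, h2, h3⟩ := disc_sub ht hp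
  have hpi := Real.pi_gt_three
  rw [abs_lt] at h1
  have hI : II p = 1 := by
    rw [II, Set.indicator_of_mem]
    · rfl
    · exact ⟨by linarith, by linarith⟩
  have hB : BB (t, p.2) = ENNReal.ofReal (2 / p.2) := by
    rw [BB, Set.indicator_of_mem]
    · simp
    · exact ⟨by simp only; linarith, by simp only; linarith⟩
  rw [hI, hB, mul_one, ← ENNReal.ofReal_inv_of_pos (by positivity),
    ← ENNReal.ofReal_mul ht.le]
  apply ENNReal.ofReal_le_ofReal
  rw [← div_eq_mul_inv, div_le_div_iff₀ (by positivity) (by linarith)]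
  nlinarith [mul_pos ht ht]

lemma gfun_sq_le {n m : ℕ} (hnm : n ≤ m) (e : Fin m → EuclideanSpace ℝ (Fin n))
    (hindep : ∀ s : Finset (Fin m), s.card = n → LinearIndependent ℝ (fun i : s => e i)) :
    ∃ C : ℝ≥0∞, C < ∞ ∧ ∀ (f : EuclideanSpace ℝ (Fin n) → ℝ), Good e f →
      ∀ x : EuclideanSpace ℝ (Fin n),
      (∫⁻ t : Fin m → ℝ,
      Set.indicator {t : Fin m → ℝ | ∀ j, 0 < t j}
        (fun t => ENNReal.ofReal (gradSq e f x t) * ∏ j, ENNReal.ofReal (t j)) t) ≤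
      C * ∫⁻ p : EuclideanSpace ℝ (Fin n) × (Fin m → ℝ),
      Set.indicator (ntCone e 1 x)
        (fun p => ENNReal.ofReal (gradSq e f p.1 p.2) *
          (∏ j, ENNReal.ofReal (p.2 j)) / volume (twistedRect e x p.2)) p := by
  obtain ⟨C, W, hC, hW, hW1, hW2⟩ := box_le_rect hnm e hindep
  refine ⟨3 ^ m * C, ENNReal.mul_lt_top (by simp) hC, fun f G x => ?_⟩
  have hHm := HH_measurable (e := e) G.1
  have hHp : Measurable (fun p : Fin m → ℝ × ℝ =>
      HH e f (x + ∑ j, (p j).1 • e j, fun j => (p j).2)) := hHm.comp (meas_pt e x)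
  -- step 1
  have s1 : (∫⁻ t : Fin m → ℝ, Set.indicator {t : Fin m → ℝ | ∀ j, 0 < t j}
        (fun t => ENNReal.ofReal (gradSq e f x t) * ∏ j, ENNReal.ofReal (t j)) t) ≤
      ∫⁻ t : Fin m → ℝ, ∫⁻ p : Fin m → ℝ × ℝ, (∏ j, BB (t j, (p j).2)) * ((∏ j, II (p j)) *
        HH e f (x + ∑ j, (p j).1 • e j, fun j => (p j).2)) := by
    apply lintegral_mono
    intro t
    by_cases ht : ∀ j, 0 < t j
    · rw [Set.indicator_of_mem (show t ∈ {t : Fin m → ℝ | ∀ j, 0 < t j} from ht)]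
      simp only
      rw [gradSq_eq G x t ht, mul_comm]
      refine (mul_le_mul_right (HH_mean G x t ht) _).trans ?_
      rw [← mul_assoc, ENNReal.prod_inv_distrib, ← Finset.prod_mul_distrib,
        ← lintegral_const_mul _ hHp, nu_eq, ← lintegral_indicator
          (MeasurableSet.univ_pi fun j => disc_measurable (t j))]
      · apply lintegral_mono
        intro p
        by_cases hp : p ∈ Set.univ.pi fun j => disc (t j)
        · rw [Set.indicator_of_mem hp]
          simp only
          rw [← mul_assoc, ← Finset.prod_mul_distrib]
          apply mul_le_mul_left
          exact Finset.prod_le_prod' fun j _ => weight_le (ht j) (hp j (Set.mem_univ j))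
        · rw [Set.indicator_of_notMem hp]; exact zero_le
      · intro i _ j _ _
        have := ht i
        left
        exact (ENNReal.ofReal_pos.2 (by positivity)).ne'
    · rw [Set.indicator_of_notMem (show t ∉ {t : Fin m → ℝ | ∀ j, 0 < t j} from ht)]
      exact zero_le
  -- step 2
  have s2 : (∫⁻ t : Fin m → ℝ, ∫⁻ p : Fin m → ℝ × ℝ, (∏ j, BB (t j, (p j).2)) *
        ((∏ j, II (p j)) * HH e f (x + ∑ j, (p j).1 • e j, fun j => (p j).2))) ≤
      3 ^ m * ∫⁻ p : Fin m → ℝ × ℝ, (∏ j, II (p j)) *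
        HH e f (x + ∑ j, (p j).1 • e j, fun j => (p j).2) := by
    have hIp : Measurable (fun p : Fin m → ℝ × ℝ => (∏ j, II (p j)) *
        HH e f (x + ∑ j, (p j).1 • e j, fun j => (p j).2)) :=
      (Finset.measurable_prod _ fun j _ => II_measurable.comp (measurable_pi_apply j)).mul hHp
    rw [lintegral_lintegral_swap]
    · rw [← lintegral_const_mul _ hIp]
      apply lintegral_mono
      intro p
      simp only
      have hBm : ∀ j, Measurable (fun t => BB (t, (p j).2)) := fun j =>
        BB_measurable.comp (measurable_id.prodMk measurable_const)
      have hBp : Measurable (fun t : Fin m → ℝ => ∏ j, BB (t j, (p j).2)) :=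
        Finset.measurable_prod _ fun j _ => (hBm j).comp (measurable_pi_apply j)
      rw [lintegral_mul_const _ hBp, lintegral_ft_prod (fun j t => BB (t, (p j).2)) hBm]
      apply mul_le_mul_left
      calc _ ≤ ∏ _j : Fin m, (3 : ℝ≥0∞) := Finset.prod_le_prod' fun j _ => BB_int _
        _ = _ := by simp
    · apply Measurable.aemeasurable
      apply Measurable.mul
      · refine Finset.measurable_prod _ fun j _ => BB_measurable.comp ?_
        exact Measurable.prodMk (by fun_prop) (by fun_prop)
      · exact hIp.comp measurable_snd
  -- step 3
  have hFm : Measurable (fun q : (Fin m → ℝ) × (Fin m → ℝ) => (∏ j, II (q.1 j, q.2 j)) *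
        HH e f (x + ∑ j, q.1 j • e j, q.2)) := by
    apply Measurable.mul
    · refine Finset.measurable_prod _ fun j _ => II_measurable.comp ?_
      exact Measurable.prodMk (by fun_prop) (by fun_prop)
    · exact hHm.comp ((measurable_const.add ((meas_comb e).comp measurable_fst)).prodMk
        measurable_snd)
  have s3 : (∫⁻ p : Fin m → ℝ × ℝ, (∏ j, II (p j)) *
        HH e f (x + ∑ j, (p j).1 • e j, fun j => (p j).2)) =
      ∫⁻ τ : Fin m → ℝ, ∫⁻ σ : Fin m → ℝ, (∏ j, II (σ j, τ j)) *
        HH e f (x + ∑ j, σ j • e j, τ) := by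
    have h1 := (volume_measurePreserving_arrowProdEquivProdArrow ℝ ℝ (Fin m)).lintegral_comp hFm
    refine Eq.trans ?_ (h1.trans ?_)
    · rfl
    · rw [Measure.volume_eq_prod, lintegral_prod_symm _ hFm.aemeasurable]
  have hcone := ntCone_measurable hnm e hindep x
  -- step 4
  have s4 : ∀ τ : Fin m → ℝ, (∫⁻ σ : Fin m → ℝ, (∏ j, II (σ j, τ j)) *
        HH e f (x + ∑ j, σ j • e j, τ)) ≤
      C * ∫⁻ z, (ntCone e 1 x).indicator (fun q => W q.2 * HH e f q) (z, τ) := by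
    intro τ
    by_cases hτ : ∀ j, 0 < τ j
    · have hmem : ∀ z, (z, τ) ∈ ntCone e 1 x ↔ z ∈ twistedRect e x τ := by
        intro z
        simp only [ntCone, one_mul]
        exact ⟨fun h => h.2, fun h => ⟨hτ, h⟩⟩
      have hRm : Measurable (fun z => (ntCone e 1 x).indicator (fun q => HH e f q) (z, τ)) :=
        (hHm.indicator hcone).comp (measurable_id.prodMk measurable_const)
      have h := hW2 x τ hτ _ hRm
      rw [← lintegral_const_mul _ hRm] at h
      refine le_trans (lintegral_mono fun σ => ?_) (h.trans (mul_le_mul_right (lintegral_mono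
        fun z => ?_) _))
      · by_cases hσ : ∀ j, σ j ∈ Set.Ioo (-τ j) (τ j)
        · apply mul_le_mul' (le_of_eq rfl)
          rw [Set.indicator_of_mem]
          rw [hmem]
          exact ⟨σ, fun j => abs_lt.2 (hσ j), rfl⟩
        · push Not at hσ
          obtain ⟨j, hj⟩ := hσ
          have : ∏ j, II (σ j, τ j) = 0 :=
            Finset.prod_eq_zero (Finset.mem_univ j) (Set.indicator_of_notMem hj _)
          simp only [this, zero_mul]
          exact zero_le
      · by_cases hz : (z, τ) ∈ ntCone e 1 x
        · rw [Set.indicator_of_mem hz, Set.indicator_of_mem hz]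
        · rw [Set.indicator_of_notMem hz, Set.indicator_of_notMem hz, mul_zero]
    · push Not at hτ
      obtain ⟨j, hj⟩ := hτ
      have : ∀ σ : Fin m → ℝ, ∏ j, II (σ j, τ j) = 0 := fun σ =>
        Finset.prod_eq_zero (Finset.mem_univ j) (Set.indicator_of_notMem
          (fun h : σ j ∈ Set.Ioo (-τ j) (τ j) => by linarith [h.1, h.2]) _)
      simp [this]
  have hWH : Measurable ((ntCone e 1 x).indicator (fun q => W q.2 * HH e f q)) :=
    ((hW.comp measurable_snd).mul hHm).indicator hcone
  calc _ ≤ _ := s1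
    _ ≤ _ := s2
    _ = _ := by rw [s3]
    _ ≤ 3 ^ m * ∫⁻ τ : Fin m → ℝ, C * ∫⁻ z, (ntCone e 1 x).indicator
          (fun q => W q.2 * HH e f q) (z, τ) := by
        apply mul_le_mul_right
        exact lintegral_mono s4
    _ = 3 ^ m * C * ∫⁻ q, (ntCone e 1 x).indicator (fun q => W q.2 * HH e f q) q := by
        rw [lintegral_const_mul' _ _ hC.ne, mul_assoc, Measure.volume_eq_prod,
          lintegral_prod_symm _ hWH.aemeasurable]
    _ ≤ _ := by
        apply mul_le_mul_right
        apply lintegral_mono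
        intro q
        by_cases hq : q ∈ ntCone e 1 x
        · rw [Set.indicator_of_mem hq, Set.indicator_of_mem hq]
          simp only
          rw [gradSq_eq G q.1 q.2 hq.1, mul_div_assoc, mul_comm]
          exact mul_le_mul_right (hW1 x q.2 hq.1) _
        · rw [Set.indicator_of_notMem hq, Set.indicator_of_notMem hq]

lemma gfun_le_Sfun_aux {n m : ℕ} (hnm : n ≤ m)
    (e : Fin m → EuclideanSpace ℝ (Fin n))
    (hindep : ∀ s : Finset (Fin m), s.card = n →
      LinearIndependent ℝ (fun i : s => e i)) :
    ∃ C : ℝ≥0∞, 0 < C ∧ C ≠ ⊤ ∧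
      ∀ (f : EuclideanSpace ℝ (Fin n) → ℝ), Integrable f →
      ∀ x : EuclideanSpace ℝ (Fin n), gfun e f x ≤ C * Sfun e f x := by
  obtain ⟨C, hC, h⟩ := gfun_sq_le hnm e hindep
  refine ⟨(1 + C) ^ (1 / 2 : ℝ), ENNReal.rpow_pos (by simp) (by simp [hC.ne]),
    ENNReal.rpow_ne_top_of_nonneg (by norm_num) (by simp [hC.ne]), fun f hf x => ?_⟩
  have hP := iterP_congr hnm e hindep hf.1.ae_eq_mk
  have hg : gradSq e f = gradSq e (hf.1.mk f) := by
    funext y t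
    unfold gradSq
    rw [hP]
  have G : Good e (hf.1.mk f) := good_of_integrable hnm e hindep
    (hf.congr hf.1.ae_eq_mk) hf.1.stronglyMeasurable_mk.measurable
  have h2 := h _ G x
  rw [← hg] at h2
  unfold gfun Sfun
  rw [← ENNReal.mul_rpow_of_nonneg _ _ (by norm_num)]
  apply ENNReal.rpow_le_rpow _ (by norm_num)
  refine h2.trans ?_
  gcongr
  exact le_add_self

/-- Pointwise control of the Littlewood–Paley `g`-function by the area function:
`g(f)(x) ≲ S(f)(x)`. -/
theorem gfun_le_Sfun {n m : ℕ} (hnm : n ≤ m)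
    (e : Fin m → EuclideanSpace ℝ (Fin n))
    (hunit : ∀ j, ‖e j‖ = 1)
    (hindep : ∀ s : Finset (Fin m), s.card = n →
      LinearIndependent ℝ (fun i : s => e i)) :
    ∃ C : ℝ≥0∞, 0 < C ∧ C ≠ ⊤ ∧
      ∀ (f : EuclideanSpace ℝ (Fin n) → ℝ), Integrable f →
      ∀ x : EuclideanSpace ℝ (Fin n), gfun e f x ≤ C * Sfun e f x := by
  exact gfun_le_Sfun_aux hnm e hindep

end
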